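/- arXiv:2112.10679 — 2 statements merged into one kernel-verified Lean document; each statement's English description precedes it below -/
import Mathlib

section
/- Let r ≥ 3 be an integer, P = MvPolynomial (Fin r) ℂ with variables X_0, …, X_{r−1}, I the ideal of P generated by {X_i X_j : i ≠ j} ∪ {X_i² − X_0² : 0 ≤ i ≤ r−1} ∪ {X_0³}, and A = P/I. Then the ℂ-vector space Derivation ℂ A A of ℂ-linear derivations of A has dimension (r² + r + 2)/2. -/
/-!
A derivation of `A = P ⧸ (S)`, for `P` a polynomial ring, is a family `d i = D (x i)` of elements
of `A` that satisfies the linearised relations `S`. For the Gorenstein fat point write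
`d i = ε i + ∑ k, Λ i k • x k + τ i • s`, where `s` is the common square of the variables. Since
`x j * a` sees only the constant coordinate and the `x j`-coordinate of `a`, the linearised
relations say that `ε = 0` and that `Λ` is the sum of a skew-symmetric and a scalar matrix, whereas
`τ` is free. As a module `Der A` is then `K ^ r × 𝔠𝔬(r)`, of rank `r + (1 + r.choose 2)`.
-/

open MvPolynomial

section QuotientDerivation

variable {K P M : Type*} [CommRing K] [CommRing P] [Algebra K P] [AddCommGroup M] [Module K M]

/-- The factorisation through `P ⧸ I` of a linear map on `P` that is linear only over the base
ring `K` and vanishes on the ideal `I`. -/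
def idealQuotientLift (I : Ideal P) (f : P →ₗ[K] M) (hf : ∀ p ∈ I, f p = 0) : P ⧸ I →ₗ[K] M :=
  (I.restrictScalars K).liftQ f hf ∘ₗ (Submodule.Quotient.restrictScalarsEquiv K I).symm

theorem linearMap_eq_zero_of_mem_span {S : Set P} {f : P →ₗ[K] M}
    (hf : ∀ g ∈ S, ∀ p, f (p * g) = 0) : ∀ q ∈ Ideal.span S, f q = 0 := by
  intro q hq
  induction hq using Submodule.closure_induction with
  | zero => exact map_zero f
  | add q₁ q₂ _ _ h₁ h₂ => rw [map_add, h₁, h₂, add_zero]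
  | smul_mem p g hg => exact hf g hg p

variable [Module P M]

theorem derivation_eq_zero_of_mem_span {S : Set P} [Module (P ⧸ Ideal.span S) M]
    [IsScalarTower P (P ⧸ Ideal.span S) M] {D : Derivation K P M} (hD : ∀ g ∈ S, D g = 0) :
    ∀ q ∈ Ideal.span S, D q = 0 := by
  refine linearMap_eq_zero_of_mem_span (f := (D : P →ₗ[K] M)) fun g hg p => ?_
  have hgM : g • D p = 0 := by
    rw [← algebraMap_smul (P ⧸ Ideal.span S) g, Ideal.Quotient.algebraMap_eq,
      Ideal.Quotient.eq_zero_iff_mem.2 (Ideal.subset_span hg), zero_smul]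
  simp [hD g hg, hgM]

variable (K M) in
/-- The derivations `P → M` that kill every element of `S`. -/
def derivationsVanishingOn [SMulCommClass K P M] (S : Set P) : Submodule K (Derivation K P M) where
  carrier := {D | ∀ g ∈ S, D g = 0}
  zero_mem' := by simp
  add_mem' hD hE g hg := by simp [hD g hg, hE g hg]
  smul_mem' c D hD g hg := by simp [hD g hg]

variable (K M) in
/-- Derivations of `P ⧸ (S)` with values in a module over it are the derivations of `P` that kill
the relations `S`. -/
def quotientDerivationEquiv [SMulCommClass K P M] (S : Set P) [Module (P ⧸ Ideal.span S) M]
    [IsScalarTower P (P ⧸ Ideal.span S) M] [SMulCommClass K (P ⧸ Ideal.span S) M] :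
    Derivation K (P ⧸ Ideal.span S) M ≃ₗ[K] derivationsVanishingOn K M S where
  toFun D := ⟨D.compAlgebraMap P, fun g hg => by
    simp [Ideal.Quotient.eq_zero_iff_mem.2 (Ideal.subset_span hg)]⟩
  map_add' _ _ := rfl
  map_smul' _ _ := rfl
  invFun D := Derivation.mk'
    (idealQuotientLift _ (D.1 : P →ₗ[K] M) (derivation_eq_zero_of_mem_span D.2)) <| by
      intro a b
      obtain ⟨p, rfl⟩ := Ideal.Quotient.mk_surjective a
      obtain ⟨q, rfl⟩ := Ideal.Quotient.mk_surjective b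
      rw [← map_mul]
      simp only [← Ideal.Quotient.algebraMap_eq, algebraMap_smul]
      exact D.1.leibniz p q
  left_inv D := by
    ext a
    obtain ⟨p, rfl⟩ := Ideal.Quotient.mk_surjective a
    rfl
  right_inv D := rfl

end QuotientDerivation

section ConformalOrthogonal

variable (K ι : Type*) [CommRing K]

/-- The Lie algebra `𝔠𝔬(ι)` of matrices `M` such that `M + Mᵀ` is scalar, as a module. It is
defined as sums of a skew-symmetric matrix with zero diagonal and a scalar matrix, which is
equivalent when `2` is not a zero divisor in `K`. -/
def conformalOrthogonal : Submodule K (Matrix ι ι K) where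
  carrier := {M | (∀ i j, i ≠ j → M i j + M j i = 0) ∧ ∀ i j, M i i = M j j}
  zero_mem' := by simp
  add_mem' := by
    rintro M N ⟨hM, hM'⟩ ⟨hN, hN'⟩
    refine ⟨fun i j hij => ?_, fun i j => ?_⟩
    · simp only [Matrix.add_apply]
      linear_combination hM i j hij + hN i j hij
    · simp only [Matrix.add_apply, hM' i j, hN' i j]
  smul_mem' := by
    rintro c M ⟨hM, hM'⟩
    refine ⟨fun i j hij => ?_, fun i j => ?_⟩
    · simp only [Matrix.smul_apply, ← smul_add, hM i j hij, smul_zero]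
    · simp only [Matrix.smul_apply, hM' i j]

variable {ι}

/-- A matrix in `𝔠𝔬(ι)` is determined by its diagonal value, read off at the index `z`, and its
entries above the diagonal. -/
def conformalOrthogonalEquiv [LinearOrder ι] (z : ι) :
    conformalOrthogonal K ι ≃ₗ[K] K × ({p : ι × ι // p.1 < p.2} → K) where
  toFun M := (M.1 z z, fun p => M.1 p.1.1 p.1.2)
  map_add' _ _ := rfl
  map_smul' _ _ := rfl
  invFun w := ⟨fun i j => if h : i < j then w.2 ⟨(i, j), h⟩
      else if h : j < i then -w.2 ⟨(j, i), h⟩ else w.1, by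
    refine ⟨fun i j hij => ?_, fun i j => by simp⟩
    rcases lt_or_gt_of_ne hij with h | h <;> simp [h, h.not_gt]⟩
  left_inv M := by
    ext i j
    rcases lt_trichotomy i j with h | rfl | h
    · simp [h]
    · simpa using M.2.2 z i
    · simpa [h, h.not_gt] using (eq_neg_of_add_eq_zero_left (M.2.1 i j h.ne')).symm
  right_inv w := by
    ext p
    · simp
    · simp [p.2]

end ConformalOrthogonal

section GorensteinFatPoint

variable (K : Type*) [CommRing K] {ι : Type*} (z : ι)

/-- The relations `X i * X j` for `i ≠ j`, `X i ^ 2 - X z ^ 2` and `X z ^ 3` of the Gorenstein fat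
point with variables indexed by `ι`, one of which is the reference variable `z`. -/
def fatPointRelations : Set (MvPolynomial ι K) :=
  {p | ∃ i j, i ≠ j ∧ p = X i * X j} ∪ {p | ∃ i, p = X i ^ 2 - X z ^ 2} ∪ {X z ^ 3}

/-- The coordinate ring of the Gorenstein fat point. -/
abbrev FatPoint : Type _ :=
  MvPolynomial ι K ⧸ Ideal.span (fatPointRelations K z)

variable {K z}

namespace FatPoint

variable (K z) in
/-- The class of the variable `X i`. -/
noncomputable def x (i : ι) : FatPoint K z :=
  Ideal.Quotient.mk _ (X i)

variable (K z) in
/-- The socle generator, the common square of the variables. -/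
noncomputable def s : FatPoint K z :=
  x K z z ^ 2

theorem x_mul_x_of_ne {i j : ι} (hij : i ≠ j) : x K z i * x K z j = 0 := by
  rw [x, x, ← map_mul, Ideal.Quotient.eq_zero_iff_mem]
  exact Ideal.subset_span (.inl (.inl ⟨i, j, hij, rfl⟩))

theorem x_mul_self (i : ι) : x K z i * x K z i = s K z := by
  rw [s, x, x, ← map_mul, ← map_pow, Ideal.Quotient.eq, ← pow_two]
  exact Ideal.subset_span (.inl (.inr ⟨i, rfl⟩))

theorem x_mul_s (i : ι) : x K z i * s K z = 0 := by
  by_cases hi : i = z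
  · rw [hi, s, ← pow_succ', x, ← map_pow, Ideal.Quotient.eq_zero_iff_mem]
    exact Ideal.subset_span (.inr rfl)
  · rw [s, pow_two, ← mul_assoc, x_mul_x_of_ne hi, zero_mul]

theorem mem_derivationsVanishingOn_iff {D : Derivation K (MvPolynomial ι K) (FatPoint K z)} :
    D ∈ derivationsVanishingOn K (FatPoint K z) (fatPointRelations K z) ↔
      (∀ i j, i ≠ j → x K z i * D (X j) + x K z j * D (X i) = 0) ∧
      (∀ i, 2 * (x K z i * D (X i)) = 2 * (x K z z * D (X z))) ∧
      3 * (s K z * D (X z)) = 0 := by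
  have X_smul (i : ι) (a : FatPoint K z) : (X i : MvPolynomial ι K) • a = x K z i * a := rfl
  have D_mul (i j : ι) : D (X i * X j) = x K z i * D (X j) + x K z j * D (X i) := by
    simp [X_smul]
  have D_sq_sub (i : ι) :
      D (X i ^ 2 - X z ^ 2) = 2 * (x K z i * D (X i)) - 2 * (x K z z * D (X z)) := by
    simp [D.leibniz_pow, X_smul]
  have D_cube : D (X z ^ 3) = 3 * (s K z * D (X z)) := by
    simp [D.leibniz_pow, pow_two, mul_smul, X_smul, s, mul_assoc]
  constructor
  · intro hD
    exact ⟨fun i j hij => D_mul i j ▸ hD _ (.inl (.inl ⟨i, j, hij, rfl⟩)),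
      fun i => sub_eq_zero.1 (D_sq_sub i ▸ hD _ (.inl (.inr ⟨i, rfl⟩))),
      D_cube ▸ hD _ (.inr rfl)⟩
  · rintro ⟨hmul, hsq, hcube⟩ g ((⟨i, j, hij, rfl⟩ | ⟨i, rfl⟩) | rfl)
    · rw [D_mul, hmul i j hij]
    · rw [D_sq_sub, hsq, sub_self]
    · rw [D_cube, hcube]

section Coordinates

variable [Fintype ι]

variable (K ι) in
/-- The coordinates `(a, v, t)` of the class `a + ∑ k, v k • x k + t • s` of a polynomial in the
fat point. -/
noncomputable def polyCoords : MvPolynomial ι K →ₗ[K] K × (ι → K) × K :=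
  (lcoeff K 0).prod <| (LinearMap.pi fun k => lcoeff K (Finsupp.single k 1)).prod <|
    ∑ k, lcoeff K (Finsupp.single k 2)

theorem polyCoords_C (a : K) : polyCoords K ι (C a) = (a, 0, 0) := by
  classical
  ext <;> simp [polyCoords, coeff_C, eq_comm (a := (0 : ι →₀ ℕ))]

theorem polyCoords_mul_X [DecidableEq ι] (p : MvPolynomial ι K) (j : ι) :
    polyCoords K ι (p * X j) =
      (0, Pi.single j (polyCoords K ι p).1, (polyCoords K ι p).2.1 j) := by
  have coeff_single_mul_X (n : ℕ) (k : ι) : coeff (Finsupp.single k (n + 1)) (p * X j) =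
      if k = j then coeff (Finsupp.single j n) p else 0 := by
    by_cases hkj : k = j
    · rw [if_pos hkj, hkj, Finsupp.single_add, coeff_mul_X]
    · rw [if_neg hkj, coeff_mul_X', if_neg (by simp [hkj])]
  refine Prod.ext ?_ (Prod.ext (funext fun k => ?_) ?_)
  · simp [polyCoords, coeff_mul_X']
  · simpa [polyCoords, Pi.single_apply] using coeff_single_mul_X 0 k
  · simp [polyCoords, coeff_single_mul_X 1]

theorem polyCoords_eq_zero_of_mem_span :
    ∀ p ∈ Ideal.span (fatPointRelations K z), polyCoords K ι p = 0 := by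
  classical
  apply linearMap_eq_zero_of_mem_span
  rintro g ((⟨i, j, hij, rfl⟩ | ⟨i, rfl⟩) | rfl) p
  · simp [← mul_assoc, polyCoords_mul_X, hij.symm]
  · simp [mul_sub, pow_two, ← mul_assoc, polyCoords_mul_X]
  · simp [pow_succ, ← mul_assoc, polyCoords_mul_X]

/-- The coordinates of an element of the fat point in the basis consisting of `1`, the variables
and the socle generator. -/
noncomputable def coords : FatPoint K z →ₗ[K] K × (ι → K) × K :=
  idealQuotientLift _ (polyCoords K ι) polyCoords_eq_zero_of_mem_span

theorem coords_x_mul [DecidableEq ι] (j : ι) (a : FatPoint K z) :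
    coords (x K z j * a) = (0, Pi.single j (coords a).1, (coords a).2.1 j) := by
  obtain ⟨p, rfl⟩ := Ideal.Quotient.mk_surjective a
  rw [mul_comm]
  exact polyCoords_mul_X p j

theorem coords_one : coords (1 : FatPoint K z) = (1, 0, 0) :=
  polyCoords_C 1

theorem coords_x [DecidableEq ι] (j : ι) : coords (x K z j) = (0, Pi.single j 1, 0) := by
  rw [← mul_one (x K z j), coords_x_mul, coords_one]
  rfl

theorem coords_s : coords (s K z) = (0, 0, 1) := by
  classical
  rw [s, pow_two, coords_x_mul, coords_x]
  simp

variable (K z) in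
/-- The element of the fat point with given coordinates. -/
noncomputable def ofCoords (w : K × (ι → K) × K) : FatPoint K z :=
  w.1 • 1 + ∑ k, w.2.1 k • x K z k + w.2.2 • s K z

theorem coords_ofCoords (w : K × (ι → K) × K) : coords (ofCoords K z w) = w := by
  classical
  simp only [ofCoords, map_add, map_sum, map_smul, coords_one, coords_x, coords_s]
  refine Prod.ext ?_ (Prod.ext (funext fun k => ?_) ?_)
  · simp [Prod.fst_sum]
  · simp [Prod.fst_sum, Prod.snd_sum, Finset.sum_apply, Pi.single_apply]
  · simp [Prod.snd_sum]

theorem ofCoords_add (w w' : K × (ι → K) × K) :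
    ofCoords K z (w + w') = ofCoords K z w + ofCoords K z w' := by
  simp only [ofCoords, Prod.fst_add, Prod.snd_add, Pi.add_apply, add_smul, Finset.sum_add_distrib]
  abel

theorem x_mul_ofCoords [DecidableEq ι] (j : ι) (w : K × (ι → K) × K) :
    x K z j * ofCoords K z w = ofCoords K z (0, Pi.single j w.1, w.2.1 j) := by
  have x_mul_sum : x K z j * ∑ k, w.2.1 k • x K z k = w.2.1 j • s K z := by
    rw [Finset.mul_sum, Finset.sum_eq_single_of_mem j (Finset.mem_univ j), mul_smul_comm,
      x_mul_self]
    intro k _ hkj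
    rw [mul_smul_comm, x_mul_x_of_ne hkj.symm, smul_zero]
  have x_mul_smul_s : x K z j * w.2.2 • s K z = 0 := by
    rw [mul_smul_comm, x_mul_s, smul_zero]
  simp [ofCoords, mul_add, x_mul_sum, x_mul_smul_s, Pi.single_apply]

theorem ofCoords_coords (a : FatPoint K z) : ofCoords K z (coords a) = a := by
  classical
  obtain ⟨p, rfl⟩ := Ideal.Quotient.mk_surjective a
  change ofCoords K z (polyCoords K ι p) = _
  induction p using MvPolynomial.induction_on with
  | C a =>
    simp only [polyCoords_C, ofCoords, Pi.zero_apply, zero_smul, Finset.sum_const_zero, add_zero,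
      ← Algebra.algebraMap_eq_smul_one]
    rfl
  | add p q hp hq => rw [map_add, map_add, ofCoords_add, hp, hq]
  | mul_X p j hp =>
    rw [polyCoords_mul_X, ← x_mul_ofCoords, hp, map_mul, mul_comm]
    rfl

theorem coords_injective : Function.Injective (coords : FatPoint K z →ₗ[K] _) :=
  Function.LeftInverse.injective ofCoords_coords

theorem x_mul_add_x_mul_eq_zero_iff {i j : ι} (hij : i ≠ j) (a b : FatPoint K z) :
    x K z i * a + x K z j * b = 0 ↔
      (coords a).1 = 0 ∧ (coords b).1 = 0 ∧ (coords a).2.1 i + (coords b).2.1 j = 0 := by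
  classical
  rw [← map_eq_zero_iff coords coords_injective, map_add, coords_x_mul, coords_x_mul]
  simp only [Prod.mk_add_mk, Prod.mk_eq_zero, add_zero, true_and, ← and_assoc]
  refine and_congr_left' ⟨fun h => ⟨?_, ?_⟩, fun h => by simp [h.1, h.2]⟩
  · simpa [hij] using congrFun h i
  · simpa [hij.symm] using congrFun h j

theorem two_mul_x_mul_eq_iff (h2 : (2 : K) ∈ nonZeroDivisors K) {a b : FatPoint K z}
    (ha : (coords a).1 = 0) (hb : (coords b).1 = 0) (i j : ι) :
    2 * (x K z i * a) = 2 * (x K z j * b) ↔ (coords a).2.1 i = (coords b).2.1 j := by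
  classical
  have coords_two_mul (k : ι) (c : FatPoint K z) (hc : (coords c).1 = 0) :
      coords (2 * (x K z k * c)) = (0, 0, 2 * (coords c).2.1 k) := by
    rw [two_mul, map_add, coords_x_mul, hc]
    simp [two_mul]
  rw [← coords_injective.eq_iff, coords_two_mul i a ha, coords_two_mul j b hb]
  simp [mul_cancel_left_mem_nonZeroDivisors h2]

theorem s_mul_eq_zero {a : FatPoint K z} (ha : (coords a).1 = 0) : s K z * a = 0 := by
  classical
  apply coords_injective
  rw [s, pow_two, mul_assoc, coords_x_mul, coords_x_mul, ha]
  simp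

theorem mem_derivationsVanishingOn_iff_coords [Nontrivial ι] (h2 : (2 : K) ∈ nonZeroDivisors K)
    {D : Derivation K (MvPolynomial ι K) (FatPoint K z)} :
    D ∈ derivationsVanishingOn K (FatPoint K z) (fatPointRelations K z) ↔
      (∀ i, (coords (D (X i))).1 = 0) ∧
        (Matrix.of fun i j => (coords (D (X i))).2.1 j) ∈ conformalOrthogonal K ι := by
  rw [mem_derivationsVanishingOn_iff]
  constructor
  · rintro ⟨hmul, hsq, -⟩
    have hconst (i : ι) : (coords (D (X i))).1 = 0 := by
      obtain ⟨j, hji⟩ := exists_ne i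
      exact ((x_mul_add_x_mul_eq_zero_iff hji _ _).1 (hmul j i hji)).1
    have hdiag (i : ι) : (coords (D (X i))).2.1 i = (coords (D (X z))).2.1 z :=
      (two_mul_x_mul_eq_iff h2 (hconst i) (hconst z) i z).1 (hsq i)
    exact ⟨hconst, fun i j hij => ((x_mul_add_x_mul_eq_zero_iff hij.symm _ _).1
      (hmul j i hij.symm)).2.2, fun i j => (hdiag i).trans (hdiag j).symm⟩
  · rintro ⟨hconst, hskew, hdiag⟩
    exact ⟨fun i j hij => (x_mul_add_x_mul_eq_zero_iff hij _ _).2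
        ⟨hconst j, hconst i, hskew j i hij.symm⟩,
      fun i => (two_mul_x_mul_eq_iff h2 (hconst i) (hconst z) i z).2 (hdiag i z),
      by rw [s_mul_eq_zero (hconst z), mul_zero]⟩

variable (z) in
/-- The derivation `D` with `D (x i) = ∑ k, Λ i k • x k + τ i • s` corresponds to `(τ, Λ)`. -/
noncomputable def derivationEquiv [Nontrivial ι] (h2 : (2 : K) ∈ nonZeroDivisors K) :
    Derivation K (FatPoint K z) (FatPoint K z) ≃ₗ[K] (ι → K) × conformalOrthogonal K ι :=
  quotientDerivationEquiv K (FatPoint K z) (fatPointRelations K z) ≪≫ₗ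
  { toFun D := (fun i => (coords (D.1 (X i))).2.2,
      ⟨_, ((mem_derivationsVanishingOn_iff_coords h2).1 D.2).2⟩)
    map_add' D E := by ext <;> simp
    map_smul' c D := by ext <;> simp
    invFun w := ⟨mkDerivation K fun i => ofCoords K z (0, w.2.1 i, w.1 i),
      (mem_derivationsVanishingOn_iff_coords h2).2 (by
        simp only [mkDerivation_X, coords_ofCoords, implies_true, true_and]
        exact w.2.2)⟩
    left_inv D := by
      refine Subtype.ext (derivation_ext fun i => coords_injective ?_)
      rw [mkDerivation_X, coords_ofCoords]
      exact Prod.ext (((mem_derivationsVanishingOn_iff_coords h2).1 D.2).1 i).symm rfl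
    right_inv w := by ext <;> simp [coords_ofCoords] }

end Coordinates

end FatPoint

end GorensteinFatPoint

theorem add_one_add_choose_two (n : ℕ) : n + (1 + n.choose 2) = (n ^ 2 + n + 2) / 2 := by
  have pascal : (n + 1).choose 2 = n + n.choose 2 := by
    rw [Nat.choose_succ_succ', Nat.choose_one_right]
  have triangle : (n + 1).choose 2 = (n ^ 2 + n) / 2 := by
    rw [Nat.choose_two_right, Nat.add_sub_cancel]
    ring_nf
  omega

theorem stmt_8_general {K : Type*} [CommRing K] [Nontrivial K] (h2 : (2 : K) ∈ nonZeroDivisors K)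
    {ι : Type*} [Fintype ι] [Nontrivial ι] (z : ι) :
    Module.finrank K (Derivation K (FatPoint K z) (FatPoint K z)) =
      (Fintype.card ι ^ 2 + Fintype.card ι + 2) / 2 := by
  obtain ⟨_, -⟩ := exists_wellFoundedLT ι
  rw [(FatPoint.derivationEquiv z h2 ≪≫ₗ
      (LinearEquiv.refl K _).prodCongr (conformalOrthogonalEquiv K z)).finrank_eq,
    Module.finrank_prod, Module.finrank_prod, Module.finrank_self,
    Module.finrank_fintype_fun_eq_card, Module.finrank_fintype_fun_eq_card, Fintype.card_subtype,
    Fintype.card_product_filter_lt]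
  exact add_one_add_choose_two _

/-- For `r ≥ 3`, `P = ℂ[X_0,…,X_{r−1}]`, `I = (X_iX_j (i≠j), X_i² − X_0², X_0³)`, and
`A = P/I` (the Gorenstein fat point), the space of ℂ-linear derivations of `A` has
dimension `(r² + r + 2)/2`. -/
theorem stmt_8 (r : ℕ) (hr : 3 ≤ r)
    (I : Ideal (MvPolynomial (Fin r) ℂ))
    (hI : I = Ideal.span
      ({p : MvPolynomial (Fin r) ℂ | ∃ i j : Fin r, i ≠ j ∧ p = MvPolynomial.X i * MvPolynomial.X j}
        ∪ {p : MvPolynomial (Fin r) ℂ | ∃ i : Fin r,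
            p = MvPolynomial.X i ^ 2 - MvPolynomial.X (⟨0, by omega⟩ : Fin r) ^ 2}
        ∪ {MvPolynomial.X (⟨0, by omega⟩ : Fin r) ^ 3})) :
    Module.finrank ℂ
      (Derivation ℂ (MvPolynomial (Fin r) ℂ ⧸ I) (MvPolynomial (Fin r) ℂ ⧸ I))
      = (r ^ 2 + r + 2) / 2 := by
  subst hI
  have : Nontrivial (Fin r) := Fin.nontrivial_iff_two_le.2 (by omega)
  have h := stmt_8_general (mem_nonZeroDivisors_of_ne_zero (two_ne_zero' ℂ)) (⟨0, by omega⟩ : Fin r)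
  rwa [Fintype.card_fin] at h
end

section
/- Let r ≥ 3 be an integer, P = MvPolynomial (Fin r) ℂ with variables X_0, …, X_{r−1}, I the ideal of P generated by {X_i X_j : i ≠ j} ∪ {X_i² − X_0² : 0 ≤ i ≤ r−1} ∪ {X_0³}, and A = P/I. Let d̄ : I/I² → A ⊗_P Ω_{P/ℂ} be the A-linear map induced by the universal derivation d : P → Ω_{P/ℂ}, and let T¹ be the cokernel of the A-linear map Hom_A(A ⊗_P Ω_{P/ℂ}, A) → Hom_A(I/I², A) given by precomposition with d̄. Then dim_ℂ T¹ = (1/6)r(r−1)(r+4). -/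
set_option synthInstance.maxHeartbeats 1000000

open TensorProduct

/-!
The algebra `A` is a Frobenius algebra: composing with a linear form that does not vanish on the
socle turns `Hom_A(-, A)` into the `k`-linear dual, so `T¹` is dual to the kernel of
`d̄ : I / I² → A ⊗ Ω`. Let `𝔪` be the ideal of the origin. With at least three variables `I² = 𝔪⁴`.
If `2 ≠ 0`, Euler's relation shows that an element of `I` whose partial derivatives all lie in `I`
belongs to `𝔪³`. Hence the kernel of `d̄` is the space of cubic forms in `r` variables whose `r`
partial derivatives are killed by the socle form. These are `r` independent conditions on a space of
dimension `(r + 2).choose 3`.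
-/

section FrobeniusForm

variable {k A M N : Type*} [CommRing A] [AddCommGroup M] [Module A M] [AddCommGroup N] [Module A N]

section CommRing

variable [CommRing k] [Algebra k A]

/-- A `k`-linear form `l` on a commutative `k`-algebra is a *Frobenius form* if the pairing
`(a, b) ↦ l (a * b)` is nondegenerate. -/
def IsFrobeniusForm (l : A →ₗ[k] k) : Prop :=
  ((LinearMap.mul k A).compr₂ l).Nondegenerate

lemma isFrobeniusForm_iff {l : A →ₗ[k] k} :
    IsFrobeniusForm l ↔ ∀ b, (∀ a, l (a * b) = 0) → b = 0 :=
  ⟨fun h => h.2, fun h => ⟨fun b hb => h b fun a => mul_comm b a ▸ hb a, h⟩⟩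

lemma IsFrobeniusForm.dual_ext {l : A →ₗ[k] k} (hl : IsFrobeniusForm l) {φ ψ : Module.Dual A M}
    (h : ∀ m, l (φ m) = l (ψ m)) : φ = ψ := by
  ext m
  refine sub_eq_zero.mp (isFrobeniusForm_iff.mp hl _ fun a => ?_)
  rw [mul_sub, map_sub, sub_eq_zero]
  simpa only [map_smul, smul_eq_mul] using h (a • m)

end CommRing

namespace IsFrobeniusForm

variable [Field k] [Algebra k A] {l : A →ₗ[k] k} [Module k M] [IsScalarTower k A M]
  [Module k N] [IsScalarTower k A N] [FiniteDimensional k A]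

lemma exists_dual_comp_eq (hl : IsFrobeniusForm l) (g : Module.Dual k M) :
    ∃ φ : Module.Dual A M, ∀ m, l (φ m) = g m := by
  let e := LinearMap.BilinForm.toDual _ hl
  let orbit (m : M) : A →ₗ[k] M := (LinearMap.toSpanSingleton A M m).restrictScalars k
  have l_mul_symm (f : Module.Dual k A) (a : A) : l (e.symm f * a) = f a :=
    LinearMap.BilinForm.apply_toDual_symm_apply (hB := hl) f a
  refine ⟨{ toFun m := e.symm (g ∘ₗ orbit m), map_add' m m' := ?_, map_smul' c m := ?_ },
    fun m => ?_⟩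
  · rw [← map_add]
    congr 1
    ext a
    simp [orbit]
  · refine e.injective (LinearMap.ext fun a => ?_)
    change l (_ * a) = l (_ * a)
    rw [l_mul_symm, RingHom.id_apply, smul_eq_mul, mul_comm c, mul_assoc, l_mul_symm]
    simp [orbit, mul_smul, smul_comm a c]
  · simpa [orbit] using l_mul_symm (g ∘ₗ orbit m) 1

/-- Composition with a Frobenius form identifies the `A`-dual of a module with its `k`-dual. -/
noncomputable def dualEquiv (hl : IsFrobeniusForm l) :
    Module.Dual A M ≃ₗ[k] Module.Dual k M :=
  LinearEquiv.ofBijective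
    { toFun φ := l ∘ₗ φ.restrictScalars k
      map_add' φ ψ := by ext; simp
      map_smul' c φ := by ext; simp }
    ⟨fun _ _ h => hl.dual_ext (LinearMap.congr_fun h), fun g =>
      (hl.exists_dual_comp_eq g).imp fun _ hφ => LinearMap.ext hφ⟩

lemma map_dualEquiv_range_dualMap (hl : IsFrobeniusForm l) (f : M →ₗ[A] N) :
    ((LinearMap.range f.dualMap).restrictScalars k).map (hl.dualEquiv (M := M)).toLinearMap =
      LinearMap.range (f.restrictScalars k).dualMap := by
  ext g
  constructor
  · rintro ⟨_, ⟨ψ, rfl⟩, rfl⟩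
    exact ⟨hl.dualEquiv ψ, rfl⟩
  · rintro ⟨h, rfl⟩
    refine ⟨_, ⟨hl.dualEquiv.symm h, rfl⟩, ?_⟩
    change (f.restrictScalars k).dualMap (hl.dualEquiv (hl.dualEquiv.symm h)) = _
    rw [LinearEquiv.apply_symm_apply]

theorem finrank_dual_quotient_range_dualMap (hl : IsFrobeniusForm l) (f : M →ₗ[A] N) :
    Module.finrank k (Module.Dual A M ⧸ LinearMap.range f.dualMap) =
      Module.finrank k (LinearMap.ker (f.restrictScalars k)) := by
  have map_range := hl.map_dualEquiv_range_dualMap f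
  rw [LinearMap.range_dualMap_eq_dualAnnihilator_ker] at map_range
  rw [← (Submodule.Quotient.restrictScalarsEquiv k (LinearMap.range f.dualMap)).finrank_eq,
    (Submodule.Quotient.equiv _ _ hl.dualEquiv map_range).finrank_eq,
    (Subspace.quotAnnihilatorEquiv _).finrank_eq, Subspace.dual_finrank_eq]

end IsFrobeniusForm

end FrobeniusForm

instance isScalarTower_quotient_cotangent {S R : Type*} [CommRing R] [CommSemiring S] [Algebra S R]
    (I : Ideal R) : IsScalarTower S (R ⧸ I) I.Cotangent :=
  .to₁₃₄ S R _ _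

section GradedPolynomials

open MvPolynomial

variable {σ R : Type*}

section CommSemiring

variable [CommSemiring R] {p : MvPolynomial σ R} {n : ℕ}

lemma mem_pow_idealOfVars_of_isHomogeneous (hp : p.IsHomogeneous n) : p ∈ idealOfVars σ R ^ n :=
  (mem_pow_idealOfVars_iff' _ _).mpr fun _ hm => hp.coeff_eq_zero hm.ne

lemma X_mul_X_mem_sq_idealOfVars (i j : σ) : X i * X j ∈ idealOfVars σ R ^ 2 :=
  mem_pow_idealOfVars_of_isHomogeneous ((isHomogeneous_X R i).mul (isHomogeneous_X R j))

lemma sq_idealOfVars_eq_span :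
    idealOfVars σ R ^ 2 = Ideal.span {p | ∃ i j, p = X i * X j} := by
  rw [sq, Ideal.span_mul_span']
  congr 1
  ext p
  simp [Set.mem_mul, eq_comm]

lemma mem_sq_idealOfVars_of_coeff_eq_zero (h0 : coeff 0 p = 0)
    (h1 : ∀ i, coeff (Finsupp.single i 1) p = 0) : p ∈ idealOfVars σ R ^ 2 := by
  rw [mem_pow_idealOfVars_iff']
  intro m hm
  rcases Nat.le_one_iff_eq_zero_or_eq_one.mp (Nat.lt_succ_iff.mp hm) with hm | hm
  · rwa [(Finsupp.degree_eq_zero_iff m).mp hm]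
  · obtain ⟨i, rfl⟩ : m ∈ Set.range fun i => Finsupp.single i 1 := by
      rwa [Finsupp.range_single_one]
    exact h1 i

lemma eq_zero_of_isHomogeneous_of_mem_pow_idealOfVars (hp : p.IsHomogeneous n)
    (hmem : p ∈ idealOfVars σ R ^ (n + 1)) : p = 0 := by
  ext m
  by_cases hm : m.degree = n
  · exact (mem_pow_idealOfVars_iff' _ _).mp hmem m (by omega)
  · exact hp.coeff_eq_zero hm

lemma pderiv_mem_pow_idealOfVars (hp : p ∈ idealOfVars σ R ^ (n + 1)) (i : σ) :
    pderiv i p ∈ idealOfVars σ R ^ n := by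
  rw [mem_pow_idealOfVars_iff'] at hp ⊢
  intro m hm
  rw [coeff_pderiv, hp _ (by rw [map_add, Finsupp.degree_single]; omega), zero_mul]

-- Euler's relation: the exponents of a monomial of degree `n` cannot all vanish in `R`.
lemma mem_pow_idealOfVars_succ_of_pderiv_mem [NoZeroDivisors R] (hn : (n : R) ≠ 0)
    (hp : p ∈ idealOfVars σ R ^ n) (hdp : ∀ i, pderiv i p ∈ idealOfVars σ R ^ n) :
    p ∈ idealOfVars σ R ^ (n + 1) := by
  simp only [mem_pow_idealOfVars_iff'] at hp hdp ⊢
  intro m hm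
  rcases Nat.lt_succ_iff_lt_or_eq.mp hm with hm | rfl
  · exact hp m hm
  obtain ⟨i, -, hi⟩ : ∃ i ∈ m.support, (m i : R) ≠ 0 := by
    refine Finset.exists_ne_zero_of_sum_ne_zero ?_
    rwa [← Nat.cast_sum, ← Finsupp.degree_apply]
  have single_le : Finsupp.single i 1 ≤ m := by
    rw [Finsupp.single_le_iff, Nat.one_le_iff_ne_zero]
    exact fun h => hi (by rw [h, Nat.cast_zero])
  obtain ⟨m', rfl⟩ := le_iff_exists_add'.mp single_le
  have coeff_eq := hdp i m' (by rw [map_add, Finsupp.degree_single]; omega)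
  rw [coeff_pderiv] at coeff_eq
  exact (mul_eq_zero.mp coeff_eq).resolve_right (by simpa using hi)

theorem finrank_homogeneousSubmodule [StrongRankCondition R] [Fintype σ] (n : ℕ) :
    Module.finrank R (homogeneousSubmodule σ R n) = (Fintype.card σ).multichoose n := by
  classical
  let e : Sym σ n ≃ {d : σ →₀ ℕ | d.degree = n} := Sym.equivNatSum σ n
  have : Fintype {d : σ →₀ ℕ | d.degree = n} := Fintype.ofEquiv _ e
  rw [homogeneousSubmodule_eq_finsupp_supported,
    (AddMonoidAlgebra.supportedEquivFinsupp _).finrank_eq,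
    Module.finrank_finsupp_self, ← Fintype.card_congr e, Sym.card_sym_eq_multichoose]

end CommSemiring

section CommRing

variable [CommRing R] {p : MvPolynomial σ R} {n : ℕ}

lemma sub_homogeneousComponent_mem_pow_idealOfVars (hp : p ∈ idealOfVars σ R ^ n) :
    p - homogeneousComponent n p ∈ idealOfVars σ R ^ (n + 1) := by
  rw [mem_pow_idealOfVars_iff'] at hp ⊢
  intro m hm
  rw [coeff_sub, coeff_homogeneousComponent]
  split_ifs with h
  · exact sub_self _
  · rw [hp m (by omega), sub_zero]

lemma sub_C_coeff_zero_mem_idealOfVars (p : MvPolynomial σ R) :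
    p - C (coeff 0 p) ∈ idealOfVars σ R := by
  simpa using sub_homogeneousComponent_mem_pow_idealOfVars (n := 0) (p := p) (by simp)

lemma finite_quotient_of_pow_idealOfVars_le [Finite σ] {I : Ideal (MvPolynomial σ R)}
    (h : idealOfVars σ R ^ n ≤ I) : Module.Finite R (MvPolynomial σ R ⧸ I) := by
  refine .of_surjective ((Ideal.Quotient.mkₐ R I).toLinearMap ∘ₗ
    (restrictTotalDegree σ R n).subtype) fun b => ?_
  obtain ⟨p, rfl⟩ := Ideal.Quotient.mk_surjective b
  let q := ∑ i ∈ Finset.range n, homogeneousComponent i p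
  have hq : q.totalDegree ≤ n := totalDegree_finsetSum_le fun i hi =>
    (homogeneousComponent_isHomogeneous i p).totalDegree_le.trans (Finset.mem_range.mp hi).le
  refine ⟨⟨q, (mem_restrictTotalDegree _ _ _).mpr hq⟩, Ideal.Quotient.eq.mpr (h ?_)⟩
  rw [Submodule.subtype_apply, mem_pow_idealOfVars_iff']
  intro m hm
  simp [q, coeff_sum, coeff_homogeneousComponent, hm]

lemma one_tmul_D_eq_zero_iff (I : Ideal (MvPolynomial σ R)) (p : MvPolynomial σ R) :
    (1 : MvPolynomial σ R ⧸ I) ⊗ₜ[MvPolynomial σ R] KaehlerDifferential.D R (MvPolynomial σ R) p = 0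
      ↔ ∀ i, pderiv i p ∈ I := by
  let b := (KaehlerDifferential.mvPolynomialBasis R σ).baseChange (MvPolynomial σ R ⧸ I)
  rw [← b.repr.map_eq_zero_iff, Finsupp.ext_iff]
  refine forall_congr' fun i => ?_
  rw [Module.Basis.baseChange_repr_tmul, KaehlerDifferential.mvPolynomialBasis_repr_apply,
    Finsupp.zero_apply, ← Ideal.Quotient.eq_zero_iff_mem, Algebra.smul_def, mul_one]
  rfl

end CommRing

end GradedPolynomials

lemma multichoose_three_sub_self (n : ℕ) :
    n.multichoose 3 - n = n * (n - 1) * (n + 4) / 6 := by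
  have six_mul : 6 * n.multichoose 3 = n * (n + 1) * (n + 2) := by
    rw [Nat.multichoose_eq]
    exact (Nat.ascFactorial_eq_factorial_mul_choose' n 3).symm.trans (by
      simp only [Nat.ascFactorial]; ring)
  obtain _ | m := n
  · simp
  · refine (Nat.div_eq_of_eq_mul_right (by norm_num) ?_).symm
    rw [Nat.mul_sub 6, six_mul, Nat.add_sub_cancel]
    exact (Nat.sub_eq_of_eq_add (by ring)).symm

section SocleForm

open MvPolynomial

variable {σ R : Type*} [Fintype σ] [CommRing R]

variable (σ R) in
/-- The sum of the coefficients of the squares `X i ^ 2`. On the fat point below it induces the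
projection onto the socle, generated by the common value of these squares. -/
noncomputable def socleForm : MvPolynomial σ R →ₗ[R] R :=
  ∑ i, lcoeff R (Finsupp.single i 2)

lemma socleForm_apply (p : MvPolynomial σ R) :
    socleForm σ R p = ∑ i, coeff (Finsupp.single i 2) p := by
  simp [socleForm]

lemma socleForm_eq_zero_of_mem {p : MvPolynomial σ R} (hp : p ∈ idealOfVars σ R ^ 3) :
    socleForm σ R p = 0 := by
  rw [socleForm_apply]
  exact Finset.sum_eq_zero fun i _ => (mem_pow_idealOfVars_iff' _ _).mp hp _ (by simp)

lemma socleForm_mul_X (p : MvPolynomial σ R) (i : σ) :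
    socleForm σ R (p * X i) = coeff (Finsupp.single i 1) p := by
  classical
  rw [socleForm_apply, Finset.sum_eq_single_of_mem i (Finset.mem_univ i)]
  · exact Finsupp.single_add i 1 1 ▸ coeff_mul_X _ i p
  · intro j _ hji
    rw [coeff_mul_X', if_neg (by simp [hji.symm])]

lemma socleForm_X_mul_X [DecidableEq σ] (i j : σ) :
    socleForm σ R (X i * X j) = if i = j then 1 else 0 := by
  rw [socleForm_mul_X, coeff_X]
  exact if_congr (Finsupp.single_left_inj one_ne_zero) rfl rfl

lemma socleForm_mul_of_mem (q : MvPolynomial σ R) {p : MvPolynomial σ R}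
    (hp : p ∈ idealOfVars σ R ^ 2) : socleForm σ R (q * p) = coeff 0 q * socleForm σ R p := by
  have tail_eq_zero : socleForm σ R ((q - C (coeff 0 q)) * p) = 0 :=
    socleForm_eq_zero_of_mem (pow_succ' (idealOfVars σ R) 2 ▸
      Ideal.mul_mem_mul (sub_C_coeff_zero_mem_idealOfVars q) hp)
  rwa [sub_mul, map_sub, sub_eq_zero, C_mul', map_smul, smul_eq_mul] at tail_eq_zero

variable (σ R) in
/-- The family of values of the socle form on the partial derivatives of a polynomial. -/
noncomputable def socleGradient : MvPolynomial σ R →ₗ[R] σ → R :=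
  LinearMap.pi fun i => socleForm σ R ∘ₗ (pderiv i).toLinearMap

lemma socleGradient_apply (p : MvPolynomial σ R) (i : σ) :
    socleGradient σ R p i = socleForm σ R (pderiv i p) := rfl

lemma socleGradient_eq_zero_of_mem {p : MvPolynomial σ R} (hp : p ∈ idealOfVars σ R ^ 4) :
    socleGradient σ R p = 0 :=
  funext fun i => socleForm_eq_zero_of_mem (pderiv_mem_pow_idealOfVars hp i)

lemma socleGradient_X_mul_X_sq [DecidableEq σ] {i j : σ} (hij : i ≠ j) :
    socleGradient σ R (X i * (X j * X j)) = Pi.single i 1 := by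
  ext l
  simp only [socleGradient_apply, Derivation.leibniz, pderiv_X, smul_eq_mul, mul_add, map_add]
  by_cases hl : l = i
  · subst hl
    simp [hij.symm, socleForm_X_mul_X]
  · by_cases hlj : l = j
    · subst hlj
      simp [hij, hij.symm, socleForm_X_mul_X]
    · simp [hl, Ne.symm hl, Ne.symm hlj]

variable (σ R) in
/-- The cubic forms whose partial derivatives are all killed by the socle form. -/
noncomputable def socleFlatCubics : Submodule R (homogeneousSubmodule σ R 3) :=
  LinearMap.ker ((socleGradient σ R).domRestrict (homogeneousSubmodule σ R 3))

lemma mem_socleFlatCubics {p : homogeneousSubmodule σ R 3} :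
    p ∈ socleFlatCubics σ R ↔ socleGradient σ R p = 0 := .rfl

lemma range_socleGradient_domRestrict [Nontrivial σ] :
    LinearMap.range ((socleGradient σ R).domRestrict (homogeneousSubmodule σ R 3)) = ⊤ := by
  classical
  rw [eq_top_iff, ← (Pi.basisFun R σ).span_eq, Submodule.span_le]
  rintro _ ⟨i, rfl⟩
  obtain ⟨j, hji⟩ := exists_ne i
  have isHomogeneous : (X i * (X j * X j) : MvPolynomial σ R).IsHomogeneous 3 :=
    (isHomogeneous_X R i).mul ((isHomogeneous_X R j).mul (isHomogeneous_X R j))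
  refine ⟨⟨_, isHomogeneous⟩, ?_⟩
  rw [LinearMap.domRestrict_apply, socleGradient_X_mul_X_sq hji.symm, Pi.basisFun_apply]

theorem finrank_socleFlatCubics {k : Type*} [Field k] [Nontrivial σ] :
    Module.finrank k (socleFlatCubics σ k) =
      Fintype.card σ * (Fintype.card σ - 1) * (Fintype.card σ + 4) / 6 := by
  have : Module.Finite k (homogeneousSubmodule σ k 3) :=
    Module.Finite.iff_fg.mpr (homogeneousSubmodule_fg σ k 3)
  have rank_nullity := LinearMap.finrank_range_add_finrank_ker
    ((socleGradient σ k).domRestrict (homogeneousSubmodule σ k 3))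
  rw [range_socleGradient_domRestrict, finrank_top, Module.finrank_pi,
    finrank_homogeneousSubmodule] at rank_nullity
  rw [← multichoose_three_sub_self]
  exact Nat.eq_sub_of_add_eq' rank_nullity

end SocleForm

section FatPoint

open MvPolynomial

variable {σ k : Type*}

section Generators

variable [CommRing k]

variable (k) in
/-- The ideal of the Gorenstein fat point: it is generated by the products of distinct variables,
the differences of squares of variables, and the cube of the reference variable `X z`. -/
noncomputable def fatPointIdeal (z : σ) : Ideal (MvPolynomial σ k) :=
  Ideal.span ({p | ∃ i j, i ≠ j ∧ p = X i * X j} ∪ {p | ∃ i, p = X i ^ 2 - X z ^ 2} ∪ {X z ^ 3})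

variable (z : σ)

lemma X_mul_X_mem_fatPointIdeal {i j : σ} (hij : i ≠ j) : X i * X j ∈ fatPointIdeal k z :=
  Ideal.subset_span (.inl (.inl ⟨i, j, hij, rfl⟩))

lemma X_sq_sub_X_sq_mem_fatPointIdeal (i j : σ) : X i ^ 2 - X j ^ 2 ∈ fatPointIdeal k z := by
  have sub_mem_z (l : σ) : X l ^ 2 - X z ^ 2 ∈ fatPointIdeal k z :=
    Ideal.subset_span (.inl (.inr ⟨l, rfl⟩))
  simpa using sub_mem (sub_mem_z i) (sub_mem_z j)

lemma mul_X_sq_mem_fatPointIdeal {p : MvPolynomial σ k} (hp : p ∈ idealOfVars σ k) :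
    p * X z ^ 2 ∈ fatPointIdeal k z := by
  refine Submodule.mem_colon_singleton.mp (?_ : p ∈ (fatPointIdeal k z).colon {X z ^ 2})
  refine (Ideal.span_le.mpr ?_ : idealOfVars σ k ≤ _) hp
  rintro _ ⟨i, rfl⟩
  rw [SetLike.mem_coe, Submodule.mem_colon_singleton, smul_eq_mul]
  rcases eq_or_ne i z with rfl | hiz
  · rw [← pow_succ']
    exact Ideal.subset_span (.inr rfl)
  · rw [sq, ← mul_assoc]
    exact Ideal.mul_mem_right _ _ (X_mul_X_mem_fatPointIdeal z hiz)

lemma fatPointIdeal_le_sq_idealOfVars : fatPointIdeal k z ≤ idealOfVars σ k ^ 2 := by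
  refine Ideal.span_le.mpr ?_
  rintro _ ((⟨i, j, -, rfl⟩ | ⟨i, rfl⟩) | rfl)
  · exact X_mul_X_mem_sq_idealOfVars i j
  · simpa only [sq (X _), SetLike.mem_coe] using
      sub_mem (X_mul_X_mem_sq_idealOfVars i i) (X_mul_X_mem_sq_idealOfVars z z)
  · rw [pow_succ (X z), sq (X z)]
    exact Ideal.mul_mem_right _ _ (X_mul_X_mem_sq_idealOfVars z z)

lemma pow_three_idealOfVars_le_fatPointIdeal : idealOfVars σ k ^ 3 ≤ fatPointIdeal k z := by
  rw [pow_succ', sq_idealOfVars_eq_span, Ideal.span_mul_span', Ideal.span_le]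
  rintro _ ⟨_, ⟨a, rfl⟩, _, ⟨b, c, rfl⟩, rfl⟩
  change X a * (X b * X c) ∈ fatPointIdeal k z
  rcases eq_or_ne b c with rfl | hbc
  · have decomposition : (X a * (X b * X b) : MvPolynomial σ k) =
        X a * (X b ^ 2 - X z ^ 2) + X a * X z ^ 2 := by ring
    rw [decomposition]
    exact add_mem (Ideal.mul_mem_left _ _ (X_sq_sub_X_sq_mem_fatPointIdeal z b z))
      (mul_X_sq_mem_fatPointIdeal z (Ideal.subset_span ⟨a, rfl⟩))
  · exact Ideal.mul_mem_left _ _ (X_mul_X_mem_fatPointIdeal z hbc)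

instance finite_quotient_fatPointIdeal [Finite σ] :
    Module.Finite k (MvPolynomial σ k ⧸ fatPointIdeal k z) :=
  finite_quotient_of_pow_idealOfVars_le (pow_three_idealOfVars_le_fatPointIdeal z)

lemma X_sq_mul_X_sq_mem_sq_fatPointIdeal_of_ne {i j : σ} (hij : i ≠ j) :
    X i ^ 2 * X j ^ 2 ∈ fatPointIdeal k z ^ 2 := by
  rw [← mul_pow]
  exact Ideal.pow_mem_pow (X_mul_X_mem_fatPointIdeal z hij) 2

lemma X_sq_mul_X_mul_X_mem_sq_fatPointIdeal (hσ : 3 ≤ ENat.card σ) (i : σ)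
    {a b : σ} (hab : a ≠ b) : X i ^ 2 * (X a * X b) ∈ fatPointIdeal k z ^ 2 := by
  obtain ⟨l, hla, hlb⟩ := ENat.exists_ne_ne_of_three_le hσ a b
  have decomposition : (X i ^ 2 * (X a * X b) : MvPolynomial σ k) =
      (X i ^ 2 - X l ^ 2) * (X a * X b) + (X l * X a) * (X l * X b) := by ring
  rw [decomposition, sq (fatPointIdeal k z)]
  exact add_mem
    (Ideal.mul_mem_mul (X_sq_sub_X_sq_mem_fatPointIdeal z i l) (X_mul_X_mem_fatPointIdeal z hab))
    (Ideal.mul_mem_mul (X_mul_X_mem_fatPointIdeal z hla) (X_mul_X_mem_fatPointIdeal z hlb))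

lemma X_pow_four_mem_sq_fatPointIdeal (hσ : 3 ≤ ENat.card σ) (i : σ) :
    X i ^ 2 * X i ^ 2 ∈ fatPointIdeal k z ^ 2 := by
  obtain ⟨a, hai, -⟩ := ENat.exists_ne_ne_of_three_le hσ i i
  obtain ⟨b, hbi, hba⟩ := ENat.exists_ne_ne_of_three_le hσ i a
  have decomposition : (X i ^ 2 * X i ^ 2 : MvPolynomial σ k) =
      (X i ^ 2 - X a ^ 2) * (X i ^ 2 - X b ^ 2) +
        X i ^ 2 * X b ^ 2 + X i ^ 2 * X a ^ 2 - X a ^ 2 * X b ^ 2 := by ring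
  have product_mem :
      (X i ^ 2 - X a ^ 2) * (X i ^ 2 - X b ^ 2) ∈ fatPointIdeal k z ^ 2 :=
    sq (fatPointIdeal k z) ▸ Ideal.mul_mem_mul
      (X_sq_sub_X_sq_mem_fatPointIdeal z i a) (X_sq_sub_X_sq_mem_fatPointIdeal z i b)
  have cross_mem {c d : σ} := X_sq_mul_X_sq_mem_sq_fatPointIdeal_of_ne (k := k) z (i := c) (j := d)
  rw [decomposition]
  exact sub_mem (add_mem (add_mem product_mem (cross_mem hbi.symm)) (cross_mem hai.symm))
    (cross_mem hba.symm)

lemma sq_fatPointIdeal (hσ : 3 ≤ ENat.card σ) :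
    fatPointIdeal k z ^ 2 = idealOfVars σ k ^ 4 := by
  refine le_antisymm ?_ ?_
  · exact (Ideal.pow_right_mono (fatPointIdeal_le_sq_idealOfVars z) 2).trans_eq (pow_mul _ 2 2).symm
  rw [show 4 = 2 + 2 from rfl, pow_add, sq_idealOfVars_eq_span, Ideal.span_mul_span', Ideal.span_le]
  rintro _ ⟨_, ⟨a, b, rfl⟩, _, ⟨c, d, rfl⟩, rfl⟩
  change X a * X b * (X c * X d) ∈ fatPointIdeal k z ^ 2
  by_cases hab : a = b <;> by_cases hcd : c = d
  · subst hab hcd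
    rw [← sq, ← sq]
    rcases eq_or_ne a c with rfl | hac
    · exact X_pow_four_mem_sq_fatPointIdeal z hσ a
    · exact X_sq_mul_X_sq_mem_sq_fatPointIdeal_of_ne z hac
  · subst hab
    rw [← sq]
    exact X_sq_mul_X_mul_X_mem_sq_fatPointIdeal z hσ a hcd
  · subst hcd
    rw [← sq, mul_comm]
    exact X_sq_mul_X_mul_X_mem_sq_fatPointIdeal z hσ c hab
  · rw [sq]
    exact Ideal.mul_mem_mul (X_mul_X_mem_fatPointIdeal z hab) (X_mul_X_mem_fatPointIdeal z hcd)

lemma homogeneousSubmodule_three_le_fatPointIdeal :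
    homogeneousSubmodule σ k 3 ≤ (fatPointIdeal k z).restrictScalars k := fun _ hp =>
  pow_three_idealOfVars_le_fatPointIdeal z (mem_pow_idealOfVars_of_isHomogeneous hp)

variable (k) in
/-- The class in `I / I ^ 2` of a cubic form, all of which lie in the ideal `I` of the fat point. -/
noncomputable def cubicToCotangent :
    homogeneousSubmodule σ k 3 →ₗ[k] (fatPointIdeal k z).Cotangent :=
  (fatPointIdeal k z).toCotangent.restrictScalars k ∘ₗ
    Submodule.inclusion (homogeneousSubmodule_three_le_fatPointIdeal z)

lemma cubicToCotangent_apply (p : homogeneousSubmodule σ k 3) :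
    cubicToCotangent k z p = (fatPointIdeal k z).toCotangent
      ⟨p, homogeneousSubmodule_three_le_fatPointIdeal z p.2⟩ := rfl

lemma cubicToCotangent_injective (hσ : 3 ≤ ENat.card σ) :
    Function.Injective (cubicToCotangent k z) := by
  rw [injective_iff_map_eq_zero]
  intro p hp
  rw [cubicToCotangent_apply, Ideal.toCotangent_eq_zero, sq_fatPointIdeal z hσ] at hp
  exact Subtype.ext (eq_zero_of_isHomogeneous_of_mem_pow_idealOfVars p.2 hp)

variable [Fintype σ]

lemma socleForm_eq_zero_of_mem_fatPointIdeal {p : MvPolynomial σ k} (hp : p ∈ fatPointIdeal k z) :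
    socleForm σ k p = 0 := by
  classical
  induction hp using Submodule.span_induction with
  | mem p hp =>
    obtain (⟨i, j, hij, rfl⟩ | ⟨i, rfl⟩) | rfl := hp
    · rw [socleForm_X_mul_X, if_neg hij]
    · rw [sq, sq, map_sub, socleForm_X_mul_X, socleForm_X_mul_X, if_pos rfl, if_pos rfl, sub_self]
    · exact socleForm_eq_zero_of_mem
        (mem_pow_idealOfVars_of_isHomogeneous (isHomogeneous_X_pow z 3))
  | zero => exact map_zero _
  | add p q _ _ hp hq => rw [map_add, hp, hq, add_zero]
  | smul q p hp ih =>
    rw [smul_eq_mul, socleForm_mul_of_mem q (fatPointIdeal_le_sq_idealOfVars z hp), ih, mul_zero]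

lemma sub_C_socleForm_mul_X_sq_mem_fatPointIdeal {p : MvPolynomial σ k}
    (hp : p ∈ idealOfVars σ k ^ 2) : p - C (socleForm σ k p) * X z ^ 2 ∈ fatPointIdeal k z := by
  classical
  rw [sq_idealOfVars_eq_span] at hp
  induction hp using Submodule.span_induction with
  | mem p hp =>
    obtain ⟨i, j, rfl⟩ := hp
    rw [socleForm_X_mul_X]
    split_ifs with hij
    · subst hij
      rw [C_1, one_mul, ← sq]
      exact X_sq_sub_X_sq_mem_fatPointIdeal z i z
    · rw [C_0, zero_mul, sub_zero]
      exact X_mul_X_mem_fatPointIdeal z hij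
  | zero => simp
  | add p q _ _ hp hq =>
    rw [map_add, map_add, add_mul, add_sub_add_comm]
    exact add_mem hp hq
  | smul q p hp ih =>
    have split_constant_term : q * p - C (coeff 0 q * socleForm σ k p) * X z ^ 2 =
        q * (p - C (socleForm σ k p) * X z ^ 2) +
          C (socleForm σ k p) * ((q - C (coeff 0 q)) * X z ^ 2) := by
      rw [C_mul]
      ring
    rw [smul_eq_mul, socleForm_mul_of_mem q (sq_idealOfVars_eq_span (R := k) ▸ hp),
      split_constant_term]
    exact add_mem (Ideal.mul_mem_left _ _ ih) (Ideal.mul_mem_left _ _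
      (mul_X_sq_mem_fatPointIdeal z (sub_C_coeff_zero_mem_idealOfVars q)))

theorem mem_fatPointIdeal_iff {p : MvPolynomial σ k} :
    p ∈ fatPointIdeal k z ↔ p ∈ idealOfVars σ k ^ 2 ∧ socleForm σ k p = 0 := by
  refine ⟨fun hp => ⟨fatPointIdeal_le_sq_idealOfVars z hp,
    socleForm_eq_zero_of_mem_fatPointIdeal z hp⟩, fun ⟨hp, hsocle⟩ => ?_⟩
  simpa [hsocle] using sub_C_socleForm_mul_X_sq_mem_fatPointIdeal z hp

lemma forall_pderiv_mem_fatPointIdeal_iff [NoZeroDivisors k] [NeZero (2 : k)]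
    {p : MvPolynomial σ k} (hp : p ∈ fatPointIdeal k z) :
    (∀ i, pderiv i p ∈ fatPointIdeal k z) ↔
      p ∈ idealOfVars σ k ^ 3 ∧ socleGradient σ k p = 0 := by
  simp only [mem_fatPointIdeal_iff, forall_and, funext_iff, socleGradient_apply, Pi.zero_apply]
  refine and_congr_left' ⟨fun hdp => ?_, fun hp3 => pderiv_mem_pow_idealOfVars hp3⟩
  exact mem_pow_idealOfVars_succ_of_pderiv_mem (mod_cast two_ne_zero)
    (fatPointIdeal_le_sq_idealOfVars z hp) hdp

end Generators

variable [Fintype σ] [Field k] (z : σ)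

variable (k) in
/-- The socle form on the coordinate ring of the fat point. -/
noncomputable def fatPointSocleForm : MvPolynomial σ k ⧸ fatPointIdeal k z →ₗ[k] k :=
  ((fatPointIdeal k z).restrictScalars k).liftQ (socleForm σ k)
      (fun _ => socleForm_eq_zero_of_mem_fatPointIdeal z) ∘ₗ
    (Submodule.Quotient.restrictScalarsEquiv k (fatPointIdeal k z)).symm.toLinearMap

lemma fatPointSocleForm_mk (p : MvPolynomial σ k) :
    fatPointSocleForm k z (Ideal.Quotient.mk _ p) = socleForm σ k p := rfl

theorem isFrobeniusForm_fatPointSocleForm : IsFrobeniusForm (fatPointSocleForm k z) := by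
  refine isFrobeniusForm_iff.mpr fun b hb => ?_
  obtain ⟨p, rfl⟩ := Ideal.Quotient.mk_surjective b
  have socleForm_mul_eq_zero (q : MvPolynomial σ k) : socleForm σ k (q * p) = 0 := by
    rw [← fatPointSocleForm_mk z, map_mul, hb]
  have coeff_single_one (i : σ) : coeff (Finsupp.single i 1) p = 0 := by
    rw [← socleForm_mul_X, mul_comm, socleForm_mul_eq_zero]
  have coeff_zero : coeff 0 p = 0 := by
    have := socleForm_mul_eq_zero (X z * X z)
    rw [mul_comm, socleForm_mul_of_mem p (X_mul_X_mem_sq_idealOfVars z z)] at this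
    classical simpa [socleForm_X_mul_X] using this
  rw [Ideal.Quotient.eq_zero_iff_mem, mem_fatPointIdeal_iff]
  exact ⟨mem_sq_idealOfVars_of_coeff_eq_zero coeff_zero coeff_single_one,
    by simpa using socleForm_mul_eq_zero 1⟩

variable [NeZero (2 : k)]
  {dbar : (fatPointIdeal k z).Cotangent →ₗ[MvPolynomial σ k ⧸ fatPointIdeal k z]
    (MvPolynomial σ k ⧸ fatPointIdeal k z) ⊗[MvPolynomial σ k]
      KaehlerDifferential k (MvPolynomial σ k)}

lemma dbar_toCotangent_eq_zero_iff
    (hdbar : ∀ x, dbar ((fatPointIdeal k z).toCotangent x) =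
      1 ⊗ₜ[MvPolynomial σ k] KaehlerDifferential.D k (MvPolynomial σ k) x.1)
    (x : fatPointIdeal k z) :
    dbar ((fatPointIdeal k z).toCotangent x) = 0 ↔
      x.1 ∈ idealOfVars σ k ^ 3 ∧ socleGradient σ k x = 0 := by
  rw [hdbar, one_tmul_D_eq_zero_iff, forall_pderiv_mem_fatPointIdeal_iff z x.2]

theorem map_cubicToCotangent_socleFlatCubics (hσ : 3 ≤ ENat.card σ)
    (hdbar : ∀ x, dbar ((fatPointIdeal k z).toCotangent x) =
      1 ⊗ₜ[MvPolynomial σ k] KaehlerDifferential.D k (MvPolynomial σ k) x.1) :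
    (socleFlatCubics σ k).map (cubicToCotangent k z) = LinearMap.ker (dbar.restrictScalars k) := by
  ext y
  rw [LinearMap.mem_ker, LinearMap.restrictScalars_apply]
  constructor
  · rintro ⟨p, hp, rfl⟩
    exact (dbar_toCotangent_eq_zero_iff z hdbar _).mpr
      ⟨mem_pow_idealOfVars_of_isHomogeneous p.2, mem_socleFlatCubics.mp hp⟩
  · obtain ⟨x, rfl⟩ := (fatPointIdeal k z).toCotangent_surjective y
    intro hx
    obtain ⟨x_mem, x_flat⟩ := (dbar_toCotangent_eq_zero_iff z hdbar x).mp hx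
    have tail_mem := sub_homogeneousComponent_mem_pow_idealOfVars x_mem
    have gradient_eq : socleGradient σ k (homogeneousComponent 3 x.1) = 0 := by
      rw [← x_flat, eq_comm, ← sub_eq_zero, ← map_sub, socleGradient_eq_zero_of_mem tail_mem]
    refine ⟨⟨_, homogeneousComponent_mem 3 x.1⟩, gradient_eq, ?_⟩
    rw [cubicToCotangent_apply, eq_comm, Ideal.toCotangent_eq, sq_fatPointIdeal z hσ]
    exact tail_mem

end FatPoint

theorem stmt_10_general {σ k : Type*} [Fintype σ] [Field k] [NeZero (2 : k)]
    (hσ : 3 ≤ Fintype.card σ) (z : σ)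
    (dbar : (fatPointIdeal k z).Cotangent →ₗ[MvPolynomial σ k ⧸ fatPointIdeal k z]
      (MvPolynomial σ k ⧸ fatPointIdeal k z) ⊗[MvPolynomial σ k]
        KaehlerDifferential k (MvPolynomial σ k))
    (hdbar : ∀ x, dbar ((fatPointIdeal k z).toCotangent x) =
      1 ⊗ₜ[MvPolynomial σ k] KaehlerDifferential.D k (MvPolynomial σ k) x.1) :
    Module.finrank k
      (Module.Dual (MvPolynomial σ k ⧸ fatPointIdeal k z) (fatPointIdeal k z).Cotangent ⧸
        LinearMap.range dbar.dualMap) =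
      Fintype.card σ * (Fintype.card σ - 1) * (Fintype.card σ + 4) / 6 := by
  have three_le_card : 3 ≤ ENat.card σ := by
    rw [ENat.card_eq_coe_fintype_card]
    exact mod_cast hσ
  have : Nontrivial σ := Fintype.one_lt_card_iff_nontrivial.mp (by omega)
  rw [(isFrobeniusForm_fatPointSocleForm z).finrank_dual_quotient_range_dualMap dbar,
    ← map_cubicToCotangent_socleFlatCubics z three_le_card hdbar,
    ← (Submodule.equivMapOfInjective _ (cubicToCotangent_injective z three_le_card) _).finrank_eq,
    finrank_socleFlatCubics]

/-- For `r ≥ 3`, `P = ℂ[X_0,…,X_{r−1}]`, `I = (X_iX_j (i≠j), X_i² − X_0², X_0³)`, `A = P/I`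
(the Gorenstein fat point), and `d̄ : I/I² → A ⊗_P Ω_{P/ℂ}` induced by the universal
derivation, the cokernel `T¹` of `Hom_A(A ⊗_P Ω_{P/ℂ}, A) → Hom_A(I/I², A)`
(precomposition with `d̄`) has `dim_ℂ T¹ = (1/6)r(r−1)(r+4)`. -/
theorem stmt_10 (r : ℕ) (hr : 3 ≤ r)
    (I : Ideal (MvPolynomial (Fin r) ℂ))
    (hI : I = Ideal.span
      ({p : MvPolynomial (Fin r) ℂ | ∃ i j : Fin r, i ≠ j ∧ p = MvPolynomial.X i * MvPolynomial.X j}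
        ∪ {p : MvPolynomial (Fin r) ℂ | ∃ i : Fin r,
            p = MvPolynomial.X i ^ 2 - MvPolynomial.X (⟨0, by omega⟩ : Fin r) ^ 2}
        ∪ {MvPolynomial.X (⟨0, by omega⟩ : Fin r) ^ 3}))
    (dbar : I.Cotangent →ₗ[MvPolynomial (Fin r) ℂ ⧸ I]
      (MvPolynomial (Fin r) ℂ ⧸ I) ⊗[MvPolynomial (Fin r) ℂ]
        (KaehlerDifferential ℂ (MvPolynomial (Fin r) ℂ)))
    (hdbar : ∀ x : I, dbar (I.toCotangent x)
      = 1 ⊗ₜ[MvPolynomial (Fin r) ℂ]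
          (KaehlerDifferential.D ℂ (MvPolynomial (Fin r) ℂ) x.1)) :
    Module.finrank ℂ
      ((Module.Dual (MvPolynomial (Fin r) ℂ ⧸ I) I.Cotangent) ⧸
        LinearMap.range dbar.dualMap)
      = r * (r - 1) * (r + 4) / 6 := by
  subst hI
  exact (stmt_10_general (by simpa using hr) _ dbar hdbar).trans (by rw [Fintype.card_fin])
end
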